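/- arXiv:2101.09290 — 2 statements merged into one kernel-verified Lean document; each statement's English description precedes it below -/
import Mathlib

section
/- The 16 linear maps B_M : M_2(ℂ) → M_2(ℂ), B_M(ρ) := M ρ M†, for M ranging over the set {I, X, Y, Z, (I+iX)/√2, (I+iY)/√2, (I+iZ)/√2, (Y+Z)/√2, (Z+X)/√2, (X+Y)/√2, (I+X)/2, (I+Y)/2, (I+Z)/2, (Y+iZ)/2, (Z+iX)/2, (X+iY)/2}, are linearly independent over ℝ in the real vector space of ℂ-linear endomorphisms of M_2(ℂ). -/
open Matrix Complex

/-- The Pauli matrix `X`. -/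
def pauliX : Matrix (Fin 2) (Fin 2) ℂ := !![0, 1; 1, 0]

/-- The Pauli matrix `Y`. -/
def pauliY : Matrix (Fin 2) (Fin 2) ℂ := !![0, -Complex.I; Complex.I, 0]

/-- The Pauli matrix `Z`. -/
def pauliZ : Matrix (Fin 2) (Fin 2) ℂ := !![1, 0; 0, -1]

/-- The 16 matrices defining the standard basis operations:
`I, X, Y, Z, (I+iX)/√2, (I+iY)/√2, (I+iZ)/√2, (Y+Z)/√2, (Z+X)/√2, (X+Y)/√2,
(I+X)/2, (I+Y)/2, (I+Z)/2, (Y+iZ)/2, (Z+iX)/2, (X+iY)/2`. -/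
noncomputable def stdBasisMats : Fin 16 → Matrix (Fin 2) (Fin 2) ℂ :=
  ![1, pauliX, pauliY, pauliZ,
    ((Real.sqrt 2 : ℂ))⁻¹ • (1 + Complex.I • pauliX),
    ((Real.sqrt 2 : ℂ))⁻¹ • (1 + Complex.I • pauliY),
    ((Real.sqrt 2 : ℂ))⁻¹ • (1 + Complex.I • pauliZ),
    ((Real.sqrt 2 : ℂ))⁻¹ • (pauliY + pauliZ),
    ((Real.sqrt 2 : ℂ))⁻¹ • (pauliZ + pauliX),
    ((Real.sqrt 2 : ℂ))⁻¹ • (pauliX + pauliY),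
    (2 : ℂ)⁻¹ • (1 + pauliX),
    (2 : ℂ)⁻¹ • (1 + pauliY),
    (2 : ℂ)⁻¹ • (1 + pauliZ),
    (2 : ℂ)⁻¹ • (pauliY + Complex.I • pauliZ),
    (2 : ℂ)⁻¹ • (pauliZ + Complex.I • pauliX),
    (2 : ℂ)⁻¹ • (pauliX + Complex.I • pauliY)]

/-- The `ℂ`-linear conjugation map `B_M : ρ ↦ M ρ M†`. -/
noncomputable def conjugationMap (M : Matrix (Fin 2) (Fin 2) ℂ) :
    Matrix (Fin 2) (Fin 2) ℂ →ₗ[ℂ] Matrix (Fin 2) (Fin 2) ℂ :=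
  (LinearMap.mulRight ℂ Mᴴ).comp (LinearMap.mulLeft ℂ M)

/-! Writing `M = ∑ i, v i • P i` in a basis `P` of the algebra gives
`M * ρ * star M = ∑ i, ∑ j, (v i * star (v j)) • (P i * ρ * star (P j))`. The two-sided
multiplications `ρ ↦ P i * ρ * star (P j)` are linearly independent because a matrix algebra is
Azumaya, so conjugations are real-linearly independent as soon as the rank-one matrices `v * vᴴ` of
their coordinate vectors are.

In the basis `I, X, Y, Z` the sixteen coordinate vectors are, up to scale, the `e i` together with
`e i + e j` and `e i + I • e j` for each of the six pairs `{i, j}`. The `(i, j)` entry of a real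
combination of their rank-one matrices only involves the last two, weighted by `1` and `star I`,
which are real-linearly independent. Once these coefficients vanish, the diagonal entries are the
remaining coefficients. -/

section RankOne

variable {R ι κ : Type*}

/-- The rank-one matrix `v * vᴴ`, whose entries are the coefficients of the sesquilinear expansion
of conjugation by the element with coordinate vector `v`. -/
def rankOneMatrix [Mul R] [Star R] (v : ι → R) : Matrix ι ι R :=
  vecMulVec v (star v)

lemma rankOneMatrix_apply [Mul R] [Star R] (v : ι → R) (i j : ι) :
    rankOneMatrix v i j = v i * star (v j) :=
  rfl

lemma rankOneMatrix_smul (s : ℂ) (v : ι → ℂ) :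
    rankOneMatrix (s • v) = Complex.normSq s • rankOneMatrix v := by
  ext i j
  simp only [rankOneMatrix_apply, Pi.smul_apply, Matrix.smul_apply, smul_eq_mul, star_mul',
    Complex.real_smul, Complex.normSq_eq_conj_mul_self, Complex.star_def]
  ring

theorem linearIndependent_rankOneMatrix_smul {v : κ → ι → ℂ} {s : κ → ℂ}
    (hv : LinearIndependent ℝ fun m => rankOneMatrix (v m)) (hs : ∀ m, s m ≠ 0) :
    LinearIndependent ℝ fun m => rankOneMatrix (s m • v m) := by
  simp only [rankOneMatrix_smul]
  exact hv.units_smul fun m => Units.mk0 _ (Complex.normSq_pos.mpr (hs m)).ne'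

variable [DecidableEq ι]

section Entries

variable [Semiring R] [StarRing R]

lemma rankOneMatrix_single_one (i : ι) :
    rankOneMatrix (Pi.single i (1 : R)) = Matrix.single i i 1 := by
  rw [rankOneMatrix, ← Pi.single_star, star_one, single_eq_single_vecMulVec_single]

lemma rankOneMatrix_single_add_smul_single_apply {a b : ι} (hab : a ≠ b) (z : R) :
    rankOneMatrix (Pi.single a 1 + z • Pi.single b 1) a b = star z := by
  simp [rankOneMatrix_apply, hab, hab.symm]

lemma rankOneMatrix_single_add_smul_single_apply_eq_zero {a b i j : ι} (hij : i ≠ j)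
    (h : s(a, b) ≠ s(i, j)) (z : R) :
    rankOneMatrix (Pi.single a 1 + z • Pi.single b 1) i j = 0 := by
  have hzero (k : ι) (ha : k ≠ a) (hb : k ≠ b) :
      (Pi.single a 1 + z • Pi.single b 1 : ι → R) k = 0 := by
    simp [ha, hb]
  have hmem : (i ≠ a ∧ i ≠ b) ∨ (j ≠ a ∧ j ≠ b) := by
    rw [Ne, Sym2.eq_iff] at h
    grind
  rcases hmem with ⟨ha, hb⟩ | ⟨ha, hb⟩ <;> simp only [rankOneMatrix_apply, hzero _ ha hb,
    star_zero, zero_mul, mul_zero]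

end Entries

/-- The coordinate vectors used in polarization: the standard basis vectors `e i` and, for each
index `k` of a pair `{a k, b k}`, the combinations `e (a k) + z k • e (b k)` and
`e (a k) + w k • e (b k)`. -/
def polarizationVec [Semiring R] (a b : κ → ι) (z w : κ → R) : ι ⊕ κ ⊕ κ → ι → R :=
  Sum.elim (fun i => Pi.single i 1)
    (Sum.elim (fun k => Pi.single (a k) 1 + z k • Pi.single (b k) 1)
      (fun k => Pi.single (a k) 1 + w k • Pi.single (b k) 1))

theorem linearIndependent_rankOneMatrix_polarizationVec [Finite ι] {a b : κ → ι} {z w : κ → ℂ}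
    (hab : ∀ k, a k ≠ b k) (hinj : Function.Injective fun k => s(a k, b k))
    (hzw : ∀ k, LinearIndependent ℝ ![z k, w k]) :
    LinearIndependent ℝ fun m => rankOneMatrix (polarizationVec a b z w m) := by
  have := Fintype.ofFinite ι
  have : Finite κ := .of_injective _ hinj
  have := Fintype.ofFinite κ
  rw [Fintype.linearIndependent_iff]
  intro c hc
  simp only [Fintype.sum_sum_type, polarizationVec, Sum.elim_inl, Sum.elim_inr,
    rankOneMatrix_single_one] at hc
  have hpair (k : κ) : c (.inr (.inl k)) = 0 ∧ c (.inr (.inr k)) = 0 := by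
    have hsingle (i : ι) : Matrix.single i i (1 : ℂ) (a k) (b k) = 0 :=
      single_apply_of_ne _ _ _ _ _ fun h => hab k (h.1.symm.trans h.2)
    have hsum (d : κ → ℝ) (u : κ → ℂ) :
        ∑ l, d l • rankOneMatrix (Pi.single (a l) 1 + u l • Pi.single (b l) 1) (a k) (b k) =
          d k • star (u k) := by
      rw [Fintype.sum_eq_single k fun l hl => by
          rw [rankOneMatrix_single_add_smul_single_apply_eq_zero (hab k) (hinj.ne hl), smul_zero],
        rankOneMatrix_single_add_smul_single_apply (hab k)]
    have hentry := congrFun₂ hc (a k) (b k)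
    simp only [Matrix.add_apply, Matrix.sum_apply, Matrix.smul_apply, hsingle, hsum, smul_zero,
      Finset.sum_const_zero, zero_add, Matrix.zero_apply] at hentry
    refine LinearIndependent.pair_iff.mp (hzw k) _ _ (star_injective ?_)
    simpa only [star_add, star_smul, star_trivial, star_zero] using hentry
  have hdiag (i : ι) : c (.inl i) = 0 := by
    simpa [hpair, Matrix.sum_apply, Matrix.single_apply] using congrFun₂ hc i i
  rintro (i | k | k)
  exacts [hdiag i, (hpair k).1, (hpair k).2]

end RankOne

section Conjugation

variable {K A ι κ : Type*} [CommRing K] [Ring A] [Algebra K A]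

theorem linearIndependent_mulLeftRight [IsDomain K] [IsAzumaya K A] {x : ι → A} {y : κ → A}
    (hx : LinearIndependent K x) (hy : LinearIndependent K y) :
    LinearIndependent K fun p : ι × κ => LinearMap.mulLeftRight K (x p.1, y p.2) := by
  have hop : LinearIndependent K (MulOpposite.opLinearEquiv K ∘ y) := hy.map' _ (LinearEquiv.ker _)
  have htmul := (hx.tmul_of_isDomain hop).map' (AlgHom.mulLeftRight K A).toLinearMap
    (LinearMap.ker_eq_bot.mpr IsAzumaya.bij.injective)
  convert! htmul using 1
  ext p ρ
  simp

variable [StarRing K] [StarRing A] [StarModule K A]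

lemma linearIndependent_star {x : ι → A} (hx : LinearIndependent K x) :
    LinearIndependent K fun i => star (x i) :=
  hx.map_of_injective_injective star (starAddEquiv : A ≃+ A).toAddMonoidHom
    (fun _ => star_eq_zero.mp) (fun _ => star_eq_zero.mp) fun r a => by simp

lemma mulLeftRight_sum_smul_star [Fintype ι] (P : ι → A) (v : ι → K) :
    LinearMap.mulLeftRight K (∑ i, v i • P i, star (∑ i, v i • P i)) =
      Fintype.linearCombination K
        (fun p : ι × ι => LinearMap.mulLeftRight K (P p.1, star (P p.2)))
        (fun p => rankOneMatrix v p.1 p.2) := by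
  ext ρ
  simp only [LinearMap.mulLeftRight_apply, star_sum, star_smul, Finset.sum_mul, Finset.mul_sum,
    Finset.smul_sum, Fintype.linearCombination_apply, Fintype.sum_prod_type, LinearMap.sum_apply,
    LinearMap.smul_apply, smul_mul_assoc, mul_smul_comm, rankOneMatrix_apply, mul_smul]
  rw [Finset.sum_comm]
  exact Finset.sum_congr rfl fun i _ => Finset.sum_congr rfl fun j _ => smul_comm _ _ _

theorem linearIndependent_mulLeftRight_star [IsDomain K] [IsAzumaya K A] [Fintype ι]
    {F : Type*} [CommRing F] [Algebra F K] [Module F A] [IsScalarTower F K A]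
    {P : ι → A} (hP : LinearIndependent K P) {v : κ → ι → K}
    (hv : LinearIndependent F fun m => rankOneMatrix (v m)) :
    LinearIndependent F fun m =>
      LinearMap.mulLeftRight K (∑ i, v m i • P i, star (∑ i, v m i • P i)) := by
  have hPP := linearIndependent_mulLeftRight hP (linearIndependent_star hP)
  simp only [mulLeftRight_sum_smul_star]
  exact hv.map' (((Fintype.linearCombination K _).restrictScalars F).comp
    (LinearEquiv.curry F K ι ι).symm.toLinearMap)
    (LinearMap.ker_eq_bot.mpr (hPP.fintypeLinearCombination_injective.comp
      (LinearEquiv.injective _)))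

end Conjugation

section Pauli

/-- The basis `I, X, Y, Z` of `M_2(ℂ)`, in which coordinates are taken. -/
def pauliBasis : Fin 4 → Matrix (Fin 2) (Fin 2) ℂ :=
  ![1, pauliX, pauliY, pauliZ]

lemma linearIndependent_pauliBasis : LinearIndependent ℂ pauliBasis := by
  rw [Fintype.linearIndependent_iff]
  intro c hc
  have hentry (i j : Fin 2) := congrFun₂ hc i j
  simp only [Fin.sum_univ_four, pauliBasis, pauliX, pauliY, pauliZ] at hentry
  have h00 : c 0 + c 3 = 0 := by simpa using hentry 0 0
  have h01 : c 1 - c 2 * I = 0 := by simpa [sub_eq_add_neg] using hentry 0 1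
  have h10 : c 1 + c 2 * I = 0 := by simpa using hentry 1 0
  have h11 : c 0 - c 3 = 0 := by simpa [sub_eq_add_neg] using hentry 1 1
  have h0 : c 0 = 0 := by linear_combination (h00 + h11) / 2
  have h1 : c 1 = 0 := by linear_combination (h01 + h10) / 2
  have h2 : c 2 = 0 := by simpa [h1] using h10
  have h3 : c 3 = 0 := by linear_combination (h00 - h11) / 2
  intro i
  fin_cases i
  exacts [h0, h1, h2, h3]

/-- The first members of the six pairs `IX, IY, IZ, YZ, ZX, XY`, as indices into `pauliBasis`. -/
def pauliPairFst : Fin 6 → Fin 4 :=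
  ![0, 0, 0, 2, 3, 1]

/-- The second members of the six pairs `IX, IY, IZ, YZ, ZX, XY`, as indices into `pauliBasis`. -/
def pauliPairSnd : Fin 6 → Fin 4 :=
  ![1, 2, 3, 3, 1, 2]

/-- The Pauli coordinate vectors of the standard basis matrices before normalization: `e i`,
`e i + e j` and `e i + I • e j`. -/
noncomputable def pauliVec : Fin 4 ⊕ Fin 6 ⊕ Fin 6 → Fin 4 → ℂ :=
  polarizationVec pauliPairFst pauliPairSnd 1 fun _ => I

/-- The position in the family `pauliVec` of the direction of each standard basis matrix. -/
def stdBasisIndex : Fin 16 → Fin 4 ⊕ Fin 6 ⊕ Fin 6 :=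
  ![.inl 0, .inl 1, .inl 2, .inl 3,
    .inr (.inr 0), .inr (.inr 1), .inr (.inr 2),
    .inr (.inl 3), .inr (.inl 4), .inr (.inl 5),
    .inr (.inl 0), .inr (.inl 1), .inr (.inl 2),
    .inr (.inr 3), .inr (.inr 4), .inr (.inr 5)]

/-- The normalization factors of the standard basis matrices. -/
noncomputable def stdBasisScale : Fin 16 → ℂ :=
  ![1, 1, 1, 1,
    (√2 : ℂ)⁻¹, (√2 : ℂ)⁻¹, (√2 : ℂ)⁻¹, (√2 : ℂ)⁻¹, (√2 : ℂ)⁻¹, (√2 : ℂ)⁻¹,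
    2⁻¹, 2⁻¹, 2⁻¹, 2⁻¹, 2⁻¹, 2⁻¹]

lemma stdBasisIndex_injective : Function.Injective stdBasisIndex := by
  decide

lemma stdBasisScale_ne_zero (m : Fin 16) : stdBasisScale m ≠ 0 := by
  fin_cases m <;> simp [stdBasisScale]

lemma stdBasisMats_eq_sum (m : Fin 16) :
    stdBasisMats m = ∑ i, (stdBasisScale m • pauliVec (stdBasisIndex m)) i • pauliBasis i := by
  fin_cases m <;>
    simp [stdBasisMats, stdBasisScale, pauliVec, stdBasisIndex, polarizationVec, pauliBasis,
      pauliPairFst, pauliPairSnd, Fin.sum_univ_four, Pi.single_apply, smul_add, smul_smul, add_comm]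

theorem linearIndependent_rankOneMatrix_pauliVec :
    LinearIndependent ℝ fun m => rankOneMatrix (pauliVec m) :=
  linearIndependent_rankOneMatrix_polarizationVec (by decide) (by decide) fun _ =>
    coe_basisOneI ▸ basisOneI.linearIndependent

end Pauli

/-- The 16 standard basis operations `B_M(ρ) = M ρ M†`, for `M` ranging over
`stdBasisMats`, are linearly independent over `ℝ` in the real vector space of
`ℂ`-linear endomorphisms of `M_2(ℂ)`. -/
theorem stdBasis_linearIndependent :
    LinearIndependent ℝ (fun i : Fin 16 => conjugationMap (stdBasisMats i)) := by
  have hrank : LinearIndependent ℝ fun m =>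
      rankOneMatrix (stdBasisScale m • pauliVec (stdBasisIndex m)) :=
    linearIndependent_rankOneMatrix_smul
      (linearIndependent_rankOneMatrix_pauliVec.comp stdBasisIndex stdBasisIndex_injective)
      stdBasisScale_ne_zero
  have : IsAzumaya ℂ (Matrix (Fin 2) (Fin 2) ℂ) := IsAzumaya.matrix ℂ (Fin 2)
  simpa only [← stdBasisMats_eq_sum] using!
    linearIndependent_mulLeftRight_star linearIndependent_pauliBasis hrank
end

section
/- The 16 maps of the standard basis span the Hermitian-preserving maps: every Hermitian-preserving ℂ-linear map L : M_2(ℂ) → M_2(ℂ) (i.e. satisfying L(ρ†) = L(ρ)† for all ρ) can be written as L = Σ_{M} c_M B_M with real coefficients c_M ∈ ℝ, where B_M(ρ) := M ρ M† and M ranges over the set {I, X, Y, Z, (I+iX)/√2, (I+iY)/√2, (I+iZ)/√2, (Y+Z)/√2, (Z+X)/√2, (X+Y)/√2, (I+X)/2, (I+Y)/2, (I+Z)/2, (Y+iZ)/2, (Z+iX)/2, (X+iY)/2}. -/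
open Matrix Complex

/-!
Let `S(A, B)` be the map `ρ ↦ A ρ B†`, which is sesquilinear in `(A, B)`. Every linear `L` is a sum
of maps `c S(A, B)`, and replacing each term by `conj(c) S(B, A)` yields `ρ ↦ L(ρ†)†`. For a
Hermitian-preserving `L` both sums equal `L`, so `2L` is a sum of Hermitian combinations
`c S(A, B) + conj(c) S(B, A)`, where by sesquilinearity `A` and `B` need only run over a spanning
set: the Pauli matrices. By polarization such a combination is real linear in `B_A`, `B_B`,
`B_{A+B}` and `B_{A+iB}`. Up to scalars, the standard basis consists of `I`, `X`, `Y`, `Z` and the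
matrices `A + B` and `A + iB` for `(A, B) = (I, X), (I, Y), (I, Z), (Y, Z), (Z, X), (X, Y)`.
-/

section Sesquilinear

variable {E F : Type*} [AddCommGroup E] [Module ℂ E] [AddCommGroup F] [Module ℂ F] [Module ℝ F]

/-- The real subspace `V` contains every Hermitian combination `c • S x y + star c • S y x`,
`c : ℂ`, of the values of the sesquilinear map `S` at `(x, y)` and `(y, x)`. -/
def HermitianPairsMem (S : E →ₗ[ℂ] E →ₗ⋆[ℂ] F) (V : Submodule ℝ F) (x y : E) : Prop :=
  ∀ c : ℂ, c • S x y + star c • S y x ∈ V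

variable {S : E →ₗ[ℂ] E →ₗ⋆[ℂ] F} {V : Submodule ℝ F} {x y : E}

theorem HermitianPairsMem.symm (h : HermitianPairsMem S V x y) : HermitianPairsMem S V y x :=
  fun c => by simpa [add_comm] using h (star c)

theorem HermitianPairsMem.of_mem_span {s : Set E}
    (h : ∀ x ∈ s, ∀ y ∈ s, HermitianPairsMem S V x y)
    (hx : x ∈ Submodule.span ℂ s) (hy : y ∈ Submodule.span ℂ s) : HermitianPairsMem S V x y := by
  induction hx, hy using Submodule.span_induction₂ with
  | mem_mem x y hx hy => exact h x hx y hy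
  | zero_left y _ => intro c; simp
  | zero_right x _ => intro c; simp
  | add_left x y z _ _ _ hxz hyz =>
    intro c
    simpa [add_add_add_comm] using V.add_mem (hxz c) (hyz c)
  | add_right x y z _ _ _ hxy hxz =>
    intro c
    simpa [add_add_add_comm] using V.add_mem (hxy c) (hxz c)
  | smul_left a x y _ _ hxy =>
    intro c
    simpa [smul_smul] using hxy (c * a)
  | smul_right a x y _ _ hxy =>
    intro c
    simpa [smul_smul] using hxy (c * star a)

variable [IsScalarTower ℝ ℂ F]

theorem HermitianPairsMem.of_diag_mem (hx : S x x ∈ V) : HermitianPairsMem S V x x := fun c => by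
  have h : c • S x x + star c • S x x = (2 * c.re) • S x x := by
    rw [← add_smul, star_def, add_conj]
    exact algebraMap_smul ℂ (2 * c.re) (S x x)
  exact h ▸ V.smul_mem _ hx

theorem smul_add_star_smul_eq_polarization (S : E →ₗ[ℂ] E →ₗ⋆[ℂ] F) (c : ℂ) (x y : E) :
    c • S x y + star c • S y x =
      c.re • (S (x + y) (x + y) - S x x - S y y) +
        c.im • (S x x + S y y - S (x + I • y) (x + I • y)) := by
  have hadd : S (x + y) (x + y) - S x x - S y y = S x y + S y x := by
    simp only [map_add, LinearMap.add_apply]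
    abel
  have haddI : S x x + S y y - S (x + I • y) (x + I • y) = I • (S x y - S y x) := by
    simp only [map_add, map_smul, map_smulₛₗ, LinearMap.add_apply, LinearMap.smul_apply, smul_add,
      smul_smul, conj_I, neg_mul, I_mul_I, neg_neg, one_smul]
    module
  have hstar : star c = c.re - c.im * I := by simp [Complex.ext_iff]
  rw [hadd, haddI, hstar, ← algebraMap_smul ℂ c.re, ← algebraMap_smul ℂ c.im, coe_algebraMap]
  nth_rw 1 [← re_add_im c]
  module

theorem diag_mem_of_diag_smul_mem {a : ℂ} (ha : a ≠ 0) (h : S (a • x) (a • x) ∈ V) :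
    S x x ∈ V := by
  have hsmul : S (a • x) (a • x) = normSq a • S x x := by
    simp only [map_smul, map_smulₛₗ, LinearMap.smul_apply, smul_smul, ← normSq_eq_conj_mul_self]
    exact algebraMap_smul ℂ (normSq a) (S x x)
  rwa [hsmul, V.smul_mem_iff (normSq_pos.2 ha).ne'] at h

theorem HermitianPairsMem.of_polarization {a b : ℂ} (ha : a ≠ 0) (hb : b ≠ 0)
    (hx : S x x ∈ V) (hy : S y y ∈ V)
    (hadd : S (a • (x + y)) (a • (x + y)) ∈ V)
    (haddI : S (b • (x + I • y)) (b • (x + I • y)) ∈ V) : HermitianPairsMem S V x y := fun c => by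
  rw [smul_add_star_smul_eq_polarization]
  have hre := V.sub_mem (V.sub_mem (diag_mem_of_diag_smul_mem ha hadd) hx) hy
  have him := V.sub_mem (V.add_mem hx hy) (diag_mem_of_diag_smul_mem hb haddI)
  exact V.add_mem (V.smul_mem _ hre) (V.smul_mem _ him)

end Sesquilinear

section Sandwich

variable {R m n p q : Type*} [CommSemiring R] [StarRing R] [Fintype m] [Fintype n]

/-- The map `ρ ↦ A ρ B†`, as a sesquilinear function of `(A, B)`; on the diagonal it is the
conjugation map `B_A`. -/
def sandwichMap :
    Matrix p m R →ₗ[R] Matrix q n R →ₗ⋆[R] Matrix m n R →ₗ[R] Matrix p q R :=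
  LinearMap.mk₂'ₛₗ (RingHom.id R) (starRingEnd R)
    (fun A B => mulRightLinearMap p R Bᴴ ∘ₗ mulLeftLinearMap n R A)
    (fun A A' B => by ext; simp [Matrix.add_mul])
    (fun a A B => by ext; simp)
    (fun A B B' => by ext; simp [Matrix.mul_add])
    (fun a A B => by ext; simp [starRingEnd_apply])

@[simp]
theorem sandwichMap_apply (A : Matrix p m R) (B : Matrix q n R) (ρ : Matrix m n R) :
    sandwichMap A B ρ = A * ρ * Bᴴ := rfl

variable [Fintype p] [Fintype q] [DecidableEq m] [DecidableEq n] [DecidableEq p] [DecidableEq q]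

theorem eq_sum_smul_sandwichMap_single (L : Matrix m n R →ₗ[R] Matrix p q R) :
    L = ∑ i, ∑ j, ∑ k, ∑ l,
      L (single i j 1) k l • sandwichMap (single k i 1) (single l j 1) := by
  ext1 ρ
  calc
    L ρ = ∑ i, ∑ j, ρ i j • L (single i j 1) := by
      conv_lhs => rw [matrix_eq_sum_single ρ]
      simp [← map_smul, smul_single]
    _ = ∑ i, ∑ j, ∑ k, ∑ l, L (single i j 1) k l • single k l (ρ i j) := by
      refine Finset.sum_congr rfl fun i _ => Finset.sum_congr rfl fun j _ => ?_
      conv_lhs => rw [matrix_eq_sum_single (L (single i j 1))]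
      simp [Finset.smul_sum, smul_single, mul_comm]
    _ = _ := by simp [LinearMap.sum_apply, single_mul_mul_single]

theorem eq_sum_star_smul_sandwichMap_single {L : Matrix m m R →ₗ[R] Matrix p p R}
    (hL : ∀ ρ, L ρᴴ = (L ρ)ᴴ) :
    L = ∑ i, ∑ j, ∑ k, ∑ l,
      star (L (single i j 1) k l) • sandwichMap (single l j 1) (single k i 1) := by
  have hstar (i j k l) : star (L (single i j 1) k l) = L (single j i 1) l k := by
    rw [← conjTranspose_apply, ← hL, conjTranspose_single, star_one]
  simp only [hstar]
  rw [Finset.sum_comm]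
  conv_lhs => rw [eq_sum_smul_sandwichMap_single L]
  exact Finset.sum_congr rfl fun i _ => Finset.sum_congr rfl fun j _ => Finset.sum_comm

end Sandwich

theorem mem_of_hermitianPairsMem_sandwichMap {m n : Type*} [Fintype m] [Finite n]
    {V : Submodule ℝ (Matrix m m ℂ →ₗ[ℂ] Matrix n n ℂ)}
    {s : Set (Matrix n m ℂ)} (hs : Submodule.span ℂ s = ⊤)
    (hV : ∀ A ∈ s, ∀ B ∈ s, HermitianPairsMem sandwichMap V A B)
    {L : Matrix m m ℂ →ₗ[ℂ] Matrix n n ℂ} (hL : ∀ ρ, L ρᴴ = (L ρ)ᴴ) : L ∈ V := by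
  classical
  have := Fintype.ofFinite n
  have hpairs (A B : Matrix n m ℂ) : HermitianPairsMem sandwichMap V A B :=
    .of_mem_span hV (hs ▸ Submodule.mem_top) (hs ▸ Submodule.mem_top)
  have hadd : L + L ∈ V := by
    nth_rw 1 [eq_sum_smul_sandwichMap_single L]
    nth_rw 2 [eq_sum_star_smul_sandwichMap_single hL]
    simp only [← Finset.sum_add_distrib]
    exact V.sum_mem fun i _ => V.sum_mem fun j _ => V.sum_mem fun k _ => V.sum_mem fun l _ =>
      hpairs _ _ _
  rwa [← two_smul ℝ L, V.smul_mem_iff two_ne_zero] at hadd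

theorem span_pauli : Submodule.span ℂ {1, pauliX, pauliY, pauliZ} = ⊤ := by
  refine eq_top_iff.2 fun A _ => ?_
  have hA : A = ((A 0 0 + A 1 1) / 2) • 1 + ((A 0 1 + A 1 0) / 2) • pauliX +
      (I * (A 0 1 - A 1 0) / 2) • pauliY + ((A 0 0 - A 1 1) / 2) • pauliZ := by
    ext i j
    fin_cases i <;> fin_cases j <;> simp [pauliX, pauliY, pauliZ] <;> grind [I_sq]
  rw [hA]
  refine add_mem (add_mem (add_mem ?_ ?_) ?_) ?_ <;>
    exact Submodule.smul_mem _ _ (Submodule.subset_span (by simp))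

theorem sandwichMap_self (M : Matrix (Fin 2) (Fin 2) ℂ) : sandwichMap M M = conjugationMap M := rfl

theorem hermitianPairsMem_pauli
    {V : Submodule ℝ (Matrix (Fin 2) (Fin 2) ℂ →ₗ[ℂ] Matrix (Fin 2) (Fin 2) ℂ)}
    (hV : ∀ i, conjugationMap (stdBasisMats i) ∈ V) :
    ∀ A ∈ ({1, pauliX, pauliY, pauliZ} : Set (Matrix (Fin 2) (Fin 2) ℂ)),
      ∀ B ∈ ({1, pauliX, pauliY, pauliZ} : Set (Matrix (Fin 2) (Fin 2) ℂ)),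
        HermitianPairsMem sandwichMap V A B := by
  simp only [← sandwichMap_self] at hV
  have h2 : (2 : ℂ)⁻¹ ≠ 0 := by norm_num
  have hsqrt : (Real.sqrt 2 : ℂ)⁻¹ ≠ 0 := by simp
  have h1X : HermitianPairsMem sandwichMap V 1 pauliX :=
    .of_polarization h2 hsqrt (hV 0) (hV 1) (hV 10) (hV 4)
  have h1Y : HermitianPairsMem sandwichMap V 1 pauliY :=
    .of_polarization h2 hsqrt (hV 0) (hV 2) (hV 11) (hV 5)
  have h1Z : HermitianPairsMem sandwichMap V 1 pauliZ :=
    .of_polarization h2 hsqrt (hV 0) (hV 3) (hV 12) (hV 6)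
  have hYZ : HermitianPairsMem sandwichMap V pauliY pauliZ :=
    .of_polarization hsqrt h2 (hV 2) (hV 3) (hV 7) (hV 13)
  have hZX : HermitianPairsMem sandwichMap V pauliZ pauliX :=
    .of_polarization hsqrt h2 (hV 3) (hV 1) (hV 8) (hV 14)
  have hXY : HermitianPairsMem sandwichMap V pauliX pauliY :=
    .of_polarization hsqrt h2 (hV 1) (hV 2) (hV 9) (hV 15)
  rintro A (rfl | rfl | rfl | rfl) B (rfl | rfl | rfl | rfl)
  exacts [.of_diag_mem (hV 0), h1X, h1Y, h1Z,
    h1X.symm, .of_diag_mem (hV 1), hXY, hZX.symm,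
    h1Y.symm, hXY.symm, .of_diag_mem (hV 2), hYZ,
    h1Z.symm, hZX, hYZ.symm, .of_diag_mem (hV 3)]

/-- **The standard basis spans the Hermitian-preserving maps.** Every
Hermitian-preserving `ℂ`-linear map `L : M_2(ℂ) → M_2(ℂ)` is a real linear
combination `L = ∑_M c_M B_M` of the 16 standard basis operations
`B_M(ρ) = M ρ M†`. -/
theorem stdBasis_spans_hermitianPreserving
    (L : Matrix (Fin 2) (Fin 2) ℂ →ₗ[ℂ] Matrix (Fin 2) (Fin 2) ℂ)
    (hL : ∀ ρ : Matrix (Fin 2) (Fin 2) ℂ, L ρᴴ = (L ρ)ᴴ) :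
    ∃ c : Fin 16 → ℝ, L = ∑ i : Fin 16, c i • conjugationMap (stdBasisMats i) := by
  have hL_mem : L ∈ Submodule.span ℝ (Set.range fun i => conjugationMap (stdBasisMats i)) :=
    mem_of_hermitianPairsMem_sandwichMap span_pauli
      (hermitianPairsMem_pauli fun i => Submodule.subset_span (Set.mem_range_self i)) hL
  obtain ⟨c, hc⟩ := (Submodule.mem_span_range_iff_exists_fun ℝ).1 hL_mem
  exact ⟨c, hc.symm⟩
end
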